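/- arXiv:1804.07951 — 2 statements merged into one kernel-verified Lean document; each statement's English description precedes it below -/
import Mathlib

section
/- Let m, c, k, ω be real numbers with 0 < m, 0 < c, 0 < k and 0 < ω. Then ‖((c/m)·(iω) + k/m) / ((iω)² + (c/m)·(iω) + k/m)‖ < 1 if and only if 2k/m < ω². -/
/-!
On the imaginary axis `s ^ 2 = -ω ^ 2`, so the transfer function is `z / (z - ω ^ 2)`, where `z` is
its numerator. Its modulus is below `1` exactly when `z` is nearer to `0` than to `ω ^ 2`, that is,
when `z` lies to the left of the perpendicular bisector `re z = ω ^ 2 / 2`. As `re z = k / m`, the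
damping `c` drops out.
-/

theorem norm_lt_norm_sub_iff_inner {E : Type*} [SeminormedAddCommGroup E] [InnerProductSpace ℝ E]
    (x y : E) : ‖x‖ < ‖x - y‖ ↔ 2 * inner ℝ x y < ‖y‖ ^ 2 := by
  rw [← sq_lt_sq₀ (norm_nonneg x) (norm_nonneg (x - y)), norm_sub_sq_real]
  constructor <;> intro h <;> linarith

theorem norm_lt_norm_sub_ofReal_iff_re (z : ℂ) {r : ℝ} (hr : 0 < r) :
    ‖z‖ < ‖z - r‖ ↔ 2 * z.re < r := by
  have inner_eq : inner ℝ z (r : ℂ) = z.re * r := by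
    simp [Complex.inner, mul_comm]
  rw [norm_lt_norm_sub_iff_inner, inner_eq, Complex.norm_of_nonneg hr.le, ← mul_assoc, sq,
    mul_lt_mul_iff_left₀ hr]

theorem norm_div_sub_ofReal_lt_one_iff_re {z : ℂ} {r : ℝ} (hr : 0 < r) (hz : z ≠ r) :
    ‖z / (z - r)‖ < 1 ↔ 2 * z.re < r := by
  rw [norm_div, div_lt_one (norm_sub_pos_iff.mpr hz), norm_lt_norm_sub_ofReal_iff_re z hr]

theorem I_mul_ofReal_sq_add (ω : ℝ) (z : ℂ) :
    (Complex.I * (ω : ℂ)) ^ 2 + z = z - ((ω ^ 2 : ℝ) : ℂ) := by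
  rw [mul_pow, Complex.I_sq, Complex.ofReal_pow]
  ring

theorem stmt1_general {m c k ω : ℝ} (hm : m ≠ 0) (hω : ω ≠ 0) (hne : c ≠ 0 ∨ k / m ≠ ω ^ 2) :
    ‖(((c / m : ℝ) : ℂ) * (Complex.I * (ω : ℂ)) + ((k / m : ℝ) : ℂ)) /
        ((Complex.I * (ω : ℂ)) ^ 2 + ((c / m : ℝ) : ℂ) * (Complex.I * (ω : ℂ)) +
          ((k / m : ℝ) : ℂ))‖ < 1 ↔
      2 * k / m < ω ^ 2 := by
  rw [add_assoc, I_mul_ofReal_sq_add, mul_div_assoc]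
  set z : ℂ := ((c / m : ℝ) : ℂ) * (Complex.I * (ω : ℂ)) + ((k / m : ℝ) : ℂ) with hz
  have z_re : z.re = k / m := by simp [hz, -Complex.ofReal_div]
  have z_im : z.im = c / m * ω := by simp [hz, -Complex.ofReal_div]
  have z_ne : z ≠ ((ω ^ 2 : ℝ) : ℂ) := by
    intro h
    rcases hne with hc | hk
    · exact mul_ne_zero (div_ne_zero hc hm) hω (by rw [← z_im, h, Complex.ofReal_im])
    · exact hk (by rw [← z_re, h, Complex.ofReal_re])
  rw [norm_div_sub_ofReal_lt_one_iff_re (sq_pos_of_ne_zero hω) z_ne, z_re]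

theorem stmt1 (m c k ω : ℝ) (hm : 0 < m) (hc : 0 < c) (hk : 0 < k) (hω : 0 < ω) :
    ‖(((c / m : ℝ) : ℂ) * (Complex.I * (ω : ℂ)) + ((k / m : ℝ) : ℂ)) /
        ((Complex.I * (ω : ℂ)) ^ 2 + ((c / m : ℝ) : ℂ) * (Complex.I * (ω : ℂ)) + ((k / m : ℝ) : ℂ))‖ < 1 ↔
      2 * k / m < ω ^ 2 :=
  stmt1_general hm.ne' hω.ne' (Or.inl hc.ne')
end

section
/- Let m, c, k, h, ω be positive reals with ω² > (2k·m − k·h·(2c + k·h))/m², set s = iω, and let z₁, z₂ : ℝ → ℂ. Assume: z₁ and z₂ are twice differentiable with continuous first and second derivatives on [0,∞); z₁, z₁', z₂, z₂', z₂'' are all of exponential order a for some real a with a < 0; z₁(0) = 0, z₂(0) = 0 and z₂'(0) = 0; the differential equation z₂''(t) + ((c + k·h)/m)·z₂'(t) + (k/m)·z₂(t) = (c/m)·z₁'(t) + (k/m)·z₁(t) holds for all t ≥ 0; and L[z₁](s) ≠ 0. Then ‖L[z₂](s) / L[z₁](s)‖ < 1, i.e., the platoon with autonomous unidirectional variable-spacing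 controller is stable at frequency ω. -/
open MeasureTheory

/-- The Laplace transform of `f : ℝ → ℂ` at `s : ℂ`:  `∫ t in (0,∞), e^{-s t} f t`. -/
noncomputable def laplace (f : ℝ → ℂ) (s : ℂ) : ℂ :=
  ∫ t in Set.Ioi (0 : ℝ), Complex.exp (-(s * t)) * f t

/-- `f` is of exponential order `a`: there is `M > 0` with `‖f t‖ ≤ M e^{a t}` for `t ≥ 0`. -/
def ExpOrder (f : ℝ → ℂ) (a : ℝ) : Prop :=
  ∃ M > 0, ∀ t ≥ (0 : ℝ), ‖f t‖ ≤ M * Real.exp (a * t)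

/-!
Integrating `(e^{-st} f)' = e^{-st} (f' - s f)` over `(0, ∞)` gives `L[f'] = s L[f] - f(0)`; the
boundary term at infinity vanishes because `e^{-st} f` and its derivative are both integrable.
With zero initial data the differential equation becomes
`(s² + p s + q) L[z₂](s) = (b s + q) L[z₁](s)`, where `p = (c + k h) / m`, `q = k / m`, `b = c / m`.
At `s = iω`,
`|s² + p s + q|² - |b s + q|² = ω² (ω² - (2 q + b² - p²))`,
and `2 q + b² - p²` is exactly the frequency threshold.
-/

/-- Absolute convergence of the integral defining `laplace f s`; without it that integral has the
junk value `0`, so linearity and the derivative rule are stated under this condition. -/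
def LaplaceIntegrable (f : ℝ → ℂ) (s : ℂ) : Prop :=
  IntegrableOn (fun t : ℝ => Complex.exp (-(s * t)) * f t) (Set.Ioi 0)

section Linearity

variable {f g : ℝ → ℂ} {s : ℂ}

theorem laplace_congr (hfg : Set.EqOn f g (Set.Ioi 0)) : laplace f s = laplace g s :=
  setIntegral_congr_fun measurableSet_Ioi fun t ht => by simp only [hfg ht]

theorem LaplaceIntegrable.congr (hf : LaplaceIntegrable f s) (hfg : Set.EqOn f g (Set.Ioi 0)) :
    LaplaceIntegrable g s :=
  IntegrableOn.congr_fun hf (fun t ht => by simp only [hfg ht]) measurableSet_Ioi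

theorem LaplaceIntegrable.add (hf : LaplaceIntegrable f s) (hg : LaplaceIntegrable g s) :
    LaplaceIntegrable (fun t => f t + g t) s := by
  simpa only [LaplaceIntegrable, IntegrableOn, mul_add] using Integrable.fun_add hf hg

theorem LaplaceIntegrable.sub (hf : LaplaceIntegrable f s) (hg : LaplaceIntegrable g s) :
    LaplaceIntegrable (fun t => f t - g t) s := by
  simpa only [LaplaceIntegrable, IntegrableOn, mul_sub, Pi.sub_def] using Integrable.sub hf hg

theorem LaplaceIntegrable.const_mul (hf : LaplaceIntegrable f s) (c : ℂ) :
    LaplaceIntegrable (fun t => c * f t) s := by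
  simpa only [LaplaceIntegrable, IntegrableOn, mul_left_comm] using Integrable.const_mul hf c

theorem laplace_add (hf : LaplaceIntegrable f s) (hg : LaplaceIntegrable g s) :
    laplace (fun t => f t + g t) s = laplace f s + laplace g s := by
  simpa only [laplace, mul_add] using integral_add hf hg

theorem laplace_sub (hf : LaplaceIntegrable f s) (hg : LaplaceIntegrable g s) :
    laplace (fun t => f t - g t) s = laplace f s - laplace g s := by
  simpa only [laplace, mul_sub] using integral_sub hf hg

theorem laplace_const_mul (c : ℂ) (f : ℝ → ℂ) (s : ℂ) :
    laplace (fun t => c * f t) s = c * laplace f s := by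
  simp only [laplace, mul_left_comm _ c, integral_const_mul]

end Linearity

theorem ExpOrder.laplaceIntegrable {f : ℝ → ℂ} {a : ℝ} {s : ℂ} (hf : ExpOrder f a)
    (has : a < s.re) (hmeas : AEStronglyMeasurable f (volume.restrict (Set.Ioi 0))) :
    LaplaceIntegrable f s := by
  obtain ⟨M, -, hM⟩ := hf
  have hbound : IntegrableOn (fun t : ℝ => M * Real.exp ((a - s.re) * t)) (Set.Ioi 0) :=
    (integrableOn_exp_mul_Ioi (sub_neg.mpr has) 0).const_mul M
  have hkernel : Continuous fun t : ℝ => Complex.exp (-(s * t)) := by fun_prop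
  refine Integrable.mono' hbound (hkernel.aestronglyMeasurable.mul hmeas) ?_
  filter_upwards [ae_restrict_mem measurableSet_Ioi] with t ht
  calc ‖Complex.exp (-(s * t)) * f t‖
      = Real.exp (-(s.re * t)) * ‖f t‖ := by simp [Complex.norm_exp]
    _ ≤ Real.exp (-(s.re * t)) * (M * Real.exp (a * t)) := by gcongr; exact hM t (le_of_lt ht)
    _ = M * Real.exp ((a - s.re) * t) := by
      rw [mul_left_comm, ← Real.exp_add]
      ring_nf

section Derivative

variable {f f' : ℝ → ℂ} {s : ℂ}

theorem hasDerivAt_cexp_neg_mul_mul {t : ℝ} {y : ℂ} (s : ℂ) (hf : HasDerivAt f y t) :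
    HasDerivAt (fun t : ℝ => Complex.exp (-(s * t)) * f t)
      (Complex.exp (-(s * t)) * (y - s * f t)) t := by
  have hexponent : HasDerivAt (fun t : ℝ => -(s * (t : ℂ))) (-(s * 1)) t :=
    (Complex.ofRealCLM.hasDerivAt.const_mul s).neg
  exact (hexponent.cexp.mul hf).congr_deriv (by ring)

theorem laplace_of_hasDerivAt (hcont : ContinuousWithinAt f (Set.Ici 0) 0)
    (hderiv : ∀ t ∈ Set.Ioi (0 : ℝ), HasDerivAt f (f' t) t)
    (hf : LaplaceIntegrable f s) (hf' : LaplaceIntegrable f' s) :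
    laplace f' s = s * laplace f s - f 0 := by
  have hderiv_mul := fun t ht => hasDerivAt_cexp_neg_mul_mul s (hderiv t ht)
  have hint : LaplaceIntegrable (fun t => f' t - s * f t) s := hf'.sub (hf.const_mul s)
  have hcont_mul : ContinuousWithinAt (fun t : ℝ => Complex.exp (-(s * t)) * f t) (Set.Ici 0) 0 :=
    ContinuousWithinAt.mul (by fun_prop) hcont
  have hintegral : laplace (fun t => f' t - s * f t) s = -f 0 := by
    simpa [laplace] using integral_Ioi_of_hasDerivAt_of_tendsto hcont_mul hderiv_mul hint
      (tendsto_zero_of_hasDerivAt_of_integrableOn_Ioi hderiv_mul hint hf)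
  rw [laplace_sub hf' (hf.const_mul s), laplace_const_mul] at hintegral
  linear_combination hintegral

theorem laplace_of_hasDerivWithinAt_Ici
    (hderiv : ∀ t ∈ Set.Ici (0 : ℝ), HasDerivWithinAt f (f' t) (Set.Ici 0) t)
    (hf : LaplaceIntegrable f s) (hf' : LaplaceIntegrable f' s) :
    laplace f' s = s * laplace f s - f 0 :=
  laplace_of_hasDerivAt (hderiv 0 Set.self_mem_Ici).continuousWithinAt
    (fun t ht => (hderiv t (Set.Ioi_subset_Ici_self ht)).hasDerivAt (Ici_mem_nhds ht)) hf hf'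

end Derivative

theorem laplace_of_second_order_ode {s p q b r : ℂ} {x x' y y' y'' : ℝ → ℂ}
    (hdx : ∀ t ∈ Set.Ici (0 : ℝ), HasDerivWithinAt x (x' t) (Set.Ici 0) t)
    (hdy : ∀ t ∈ Set.Ici (0 : ℝ), HasDerivWithinAt y (y' t) (Set.Ici 0) t)
    (hdy' : ∀ t ∈ Set.Ici (0 : ℝ), HasDerivWithinAt y' (y'' t) (Set.Ici 0) t)
    (hx : LaplaceIntegrable x s) (hx' : LaplaceIntegrable x' s)
    (hy : LaplaceIntegrable y s) (hy' : LaplaceIntegrable y' s)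
    (hode : ∀ t > (0 : ℝ), y'' t + p * y' t + q * y t = b * x' t + r * x t) :
    (s ^ 2 + p * s + q) * laplace y s
      = (b * s + r) * laplace x s + ((s + p) * y 0 + y' 0 - b * x 0) := by
  have hinput := (hx'.const_mul b).add (hx.const_mul r)
  have hfeedback := (hy'.const_mul p).add (hy.const_mul q)
  have hy''_eq : Set.EqOn (fun t => b * x' t + r * x t - (p * y' t + q * y t)) y'' (Set.Ioi 0) :=
    fun t ht => by linear_combination -hode t ht
  have hlaplace_y'' : laplace y'' s
      = b * laplace x' s + r * laplace x s - (p * laplace y' s + q * laplace y s) := by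
    rw [← laplace_congr hy''_eq, laplace_sub hinput hfeedback,
      laplace_add (hx'.const_mul b) (hx.const_mul r),
      laplace_add (hy'.const_mul p) (hy.const_mul q)]
    simp only [laplace_const_mul]
  have hy'' : LaplaceIntegrable y'' s := (hinput.sub hfeedback).congr hy''_eq
  rw [laplace_of_hasDerivWithinAt_Ici hdy' hy' hy'', laplace_of_hasDerivWithinAt_Ici hdy hy hy',
    laplace_of_hasDerivWithinAt_Ici hdx hx hx'] at hlaplace_y''
  linear_combination hlaplace_y''

open Complex in
theorem norm_linear_lt_norm_quadratic_imaginary_iff {p q b ω : ℝ} (hω : ω ≠ 0) :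
    ‖b * (I * ω) + q‖ < ‖(I * ω) ^ 2 + p * (I * ω) + q‖ ↔ 2 * q + b ^ 2 - p ^ 2 < ω ^ 2 := by
  have hnum : b * (I * ω) + q = (q : ℂ) + (b * ω : ℝ) * I := by push_cast; ring
  have hden : (I * ω) ^ 2 + p * (I * ω) + q = ((q - ω ^ 2 : ℝ) : ℂ) + (p * ω : ℝ) * I := by
    push_cast
    linear_combination (ω : ℂ) ^ 2 * I_sq
  have hgap : (q - ω ^ 2) ^ 2 + (p * ω) ^ 2 - (q ^ 2 + (b * ω) ^ 2)
      = ω ^ 2 * (ω ^ 2 - (2 * q + b ^ 2 - p ^ 2)) := by ring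
  rw [hnum, hden, norm_add_mul_I, norm_add_mul_I, Real.sqrt_lt_sqrt_iff (by positivity),
    ← sub_pos, hgap, mul_pos_iff_of_pos_left (by positivity), sub_pos]

theorem norm_div_lt_one_of_mul_eq_mul {𝕜 : Type*} [NormedField 𝕜] {x y n d : 𝕜} (hx : x ≠ 0)
    (h : d * y = n * x) (hnd : ‖n‖ < ‖d‖) : ‖y / x‖ < 1 := by
  have hd : 0 < ‖d‖ := (norm_nonneg n).trans_lt hnd
  have hdiv : y / x = n / d := by
    rw [div_eq_div_iff hx (norm_pos_iff.mp hd), mul_comm y, h]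
  rwa [hdiv, norm_div, div_lt_one hd]

theorem stmt6_general {m c k h ω : ℝ} (hm : m ≠ 0) (hω : ω ≠ 0)
    (hfreq : (2 * k * m - k * h * (2 * c + k * h)) / m ^ 2 < ω ^ 2)
    {z₁ z₂ z₁' z₂' z₂'' : ℝ → ℂ}
    (hdz₁ : ∀ t ∈ Set.Ici (0 : ℝ), HasDerivWithinAt z₁ (z₁' t) (Set.Ici 0) t)
    (hdz₂ : ∀ t ∈ Set.Ici (0 : ℝ), HasDerivWithinAt z₂ (z₂' t) (Set.Ici 0) t)
    (hdz₂' : ∀ t ∈ Set.Ici (0 : ℝ), HasDerivWithinAt z₂' (z₂'' t) (Set.Ici 0) t)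
    (hz₁ : LaplaceIntegrable z₁ (Complex.I * ω)) (hz₁' : LaplaceIntegrable z₁' (Complex.I * ω))
    (hz₂ : LaplaceIntegrable z₂ (Complex.I * ω)) (hz₂' : LaplaceIntegrable z₂' (Complex.I * ω))
    (hinit₁ : z₁ 0 = 0) (hinit₂ : z₂ 0 = 0) (hinit₂' : z₂' 0 = 0)
    (hode : ∀ t > (0 : ℝ),
      z₂'' t + (((c + k * h) / m : ℝ) : ℂ) * z₂' t + ((k / m : ℝ) : ℂ) * z₂ t
        = ((c / m : ℝ) : ℂ) * z₁' t + ((k / m : ℝ) : ℂ) * z₁ t)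
    (hL : laplace z₁ (Complex.I * ω) ≠ 0) :
    ‖laplace z₂ (Complex.I * ω) / laplace z₁ (Complex.I * ω)‖ < 1 := by
  have htransfer := laplace_of_second_order_ode hdz₁ hdz₂ hdz₂' hz₁ hz₁' hz₂ hz₂' hode
  simp only [hinit₁, hinit₂, hinit₂', mul_zero, add_zero, sub_zero] at htransfer
  have hthreshold : 2 * (k / m) + (c / m) ^ 2 - ((c + k * h) / m) ^ 2
      = (2 * k * m - k * h * (2 * c + k * h)) / m ^ 2 := by
    field_simp
    ring
  exact norm_div_lt_one_of_mul_eq_mul hL htransfer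
    ((norm_linear_lt_norm_quadratic_imaginary_iff hω).mpr (hthreshold.trans_lt hfreq))

theorem stmt6 (m c k h ω : ℝ) (hm : 0 < m) (hc : 0 < c) (hk : 0 < k) (hh : 0 < h) (hω : 0 < ω)
    (hfreq : (2 * k * m - k * h * (2 * c + k * h)) / m ^ 2 < ω ^ 2)
    (s : ℂ) (hs : s = Complex.I * (ω : ℂ)) (a : ℝ) (ha : a < 0)
    (z₁ z₂ z₁' z₁'' z₂' z₂'' : ℝ → ℂ)
    (hdz₁ : ∀ t ∈ Set.Ici (0 : ℝ), HasDerivWithinAt z₁ (z₁' t) (Set.Ici 0) t)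
    (hdz₁' : ∀ t ∈ Set.Ici (0 : ℝ), HasDerivWithinAt z₁' (z₁'' t) (Set.Ici 0) t)
    (hdz₂ : ∀ t ∈ Set.Ici (0 : ℝ), HasDerivWithinAt z₂ (z₂' t) (Set.Ici 0) t)
    (hdz₂' : ∀ t ∈ Set.Ici (0 : ℝ), HasDerivWithinAt z₂' (z₂'' t) (Set.Ici 0) t)
    (hcz₁' : ContinuousOn z₁' (Set.Ici 0)) (hcz₁'' : ContinuousOn z₁'' (Set.Ici 0))
    (hcz₂' : ContinuousOn z₂' (Set.Ici 0)) (hcz₂'' : ContinuousOn z₂'' (Set.Ici 0))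
    (hez₁ : ExpOrder z₁ a) (hez₁' : ExpOrder z₁' a)
    (hez₂ : ExpOrder z₂ a) (hez₂' : ExpOrder z₂' a) (hez₂'' : ExpOrder z₂'' a)
    (hinit₁ : z₁ 0 = 0) (hinit₂ : z₂ 0 = 0) (hinit₂' : z₂' 0 = 0)
    (hode : ∀ t ≥ (0 : ℝ),
      z₂'' t + (((c + k * h) / m : ℝ) : ℂ) * z₂' t + ((k / m : ℝ) : ℂ) * z₂ t
        = ((c / m : ℝ) : ℂ) * z₁' t + ((k / m : ℝ) : ℂ) * z₁ t)
    (hL : laplace z₁ s ≠ 0) :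
    ‖laplace z₂ s / laplace z₁ s‖ < 1 := by
  subst hs
  have hint {f : ℝ → ℂ} (hf : ExpOrder f a) (hcont : ContinuousOn f (Set.Ici 0)) :
      LaplaceIntegrable f (Complex.I * ω) :=
    hf.laplaceIntegrable (by simpa using ha)
      ((hcont.mono Set.Ioi_subset_Ici_self).aestronglyMeasurable measurableSet_Ioi)
  exact stmt6_general hm.ne' hω.ne' hfreq hdz₁ hdz₂ hdz₂'
    (hint hez₁ (HasDerivWithinAt.continuousOn hdz₁)) (hint hez₁' hcz₁')
    (hint hez₂ (HasDerivWithinAt.continuousOn hdz₂)) (hint hez₂' hcz₂')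
    hinit₁ hinit₂ hinit₂' (fun t ht => hode t (le_of_lt ht)) hL
end
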